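/- Let L ∈ ℕ and let F : ℝ → ℝ be a C² function and −∞ = p₀ < p₁ < ⋯ < p_{2L+1} < p_{2L+2} = +∞ be such that: F(p) → +∞ as |p| → ∞; F'(p_i) = 0 and F''(p_i) ≠ 0 for 1 ≤ i ≤ 2L+1; F' > 0 on each interval (p_{2i+1}, p_{2i+2}) for 0 ≤ i ≤ L; and F' < 0 on each interval (p_{2i}, p_{2i+1}) for 0 ≤ i ≤ L. Set m = min_{1 ≤ i ≤ 2L} |F(p_i) − F(p_{i+1})|. Let V : ℝ → ℝ be continuous and 1-periodic with max V − min V < m, and set H(x,p) = F(p) − V(x). Fix P ∈ ℝ, let H̄(P) ∈ ℝ be a constant such that F(P + u'(x)) − V(x) = H̄(P) admits a continuous 1-periodic viscosity solution on 𝕋, and for each ε > 0 let u^ε be the continuous 1-periodic viscosity solution of ε u^ε(x) + F(P + (u^ε)'(x)) − V(x) = 0 on 𝕋. Then there exists a continuous 1-periodic viscosity solution u⁰ of F(P + (u⁰)'(x)) − V(x) = H̄(P) on 𝕋 such that u^ε + H̄(P)/ε converges uniformly to u⁰ as ε → 0⁺. -/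

import Mathlib

open Filter Set
open scoped Topology

noncomputable section

/-- Viscosity subsolution of `E(x, u(x), u'(x)) = 0` on `ℝ`. -/
def ViscSub1 (E : ℝ → ℝ → ℝ → ℝ) (u : ℝ → ℝ) : Prop :=
  ∀ φ : ℝ → ℝ, ContDiff ℝ 1 φ → ∀ x₀ : ℝ, IsLocalMax (u - φ) x₀ →
    E x₀ (u x₀) (deriv φ x₀) ≤ 0

/-- Viscosity supersolution of `E(x, u(x), u'(x)) = 0` on `ℝ`. -/
def ViscSuper1 (E : ℝ → ℝ → ℝ → ℝ) (u : ℝ → ℝ) : Prop :=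
  ∀ φ : ℝ → ℝ, ContDiff ℝ 1 φ → ∀ x₀ : ℝ, IsLocalMin (u - φ) x₀ →
    0 ≤ E x₀ (u x₀) (deriv φ x₀)

/-- Viscosity solution of `E(x, u(x), u'(x)) = 0` on `ℝ`. -/
def ViscSol1 (E : ℝ → ℝ → ℝ → ℝ) (u : ℝ → ℝ) : Prop :=
  ViscSub1 E u ∧ ViscSuper1 E u

/-! Put `G q = F (P + q)`, `f = V + H̄` and `v ε = u ε + H̄ / ε`, which solves `ε v + G (v') = f`.
Comparison with a solution of the cell problem `G (w') = f` bounds `v ε` uniformly in `ε`. A slope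
`κ` with `G κ` outside the range of `f` is a barrier: for small `ε`, a line of slope `κ` cannot
touch `v ε` from above if `G κ > max f`, nor from below if `G κ < min f`, and by periodicity either
one forces all slopes of `v ε` to stay on the same side of `κ` as `0`. Since the oscillation of `V`
is smaller than every gap between consecutive critical values, such barriers enclose `0` in an
interval `[a, b]` on which `G` has at most one critical point, and this one is nondegenerate; hence
`exp (K G)` or `exp (-K G)` is convex on `[a, b]` for large `K`. By reflection assume the former.

The family `v ε` is then bounded and equi-Lipschitz, so it remains to see that any two limits agree.
If `v ε` is `δ`-close to a limit `w` and `η = θ ε` with `θ < 1`, then applying the convex function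
`exp (K G)` to the slopes of `θ v ε + (1 - θ) w` shows that this combination is, up to an error of
order `δ`, a subsolution of the equation with discount `η`, the discount `ε` being diluted by `θ`.
Comparison gives `w - 2 δ ≤ v η` for all `η < ε`, so `w` lies below every other limit.
-/

section Jets

/-- The superjet of `u` at `x`: the slopes at `x` of the `C¹` functions touching `u` from above
there. A subjet of `u` is expressed as the negative of a superjet of `-u`. -/
def superjet (u : ℝ → ℝ) (x : ℝ) : Set ℝ :=
  {t | ∃ φ : ℝ → ℝ, ContDiff ℝ 1 φ ∧ IsLocalMax (u - φ) x ∧ deriv φ x = t}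

variable {E : ℝ → ℝ → ℝ → ℝ} {u : ℝ → ℝ} {x t : ℝ}

lemma mem_superjet_of_isLocalMax {φ : ℝ → ℝ} (hφ : ContDiff ℝ 1 φ)
    (hmax : IsLocalMax (fun y ↦ u y - φ y) x) (hderiv : HasDerivAt φ t x) : t ∈ superjet u x :=
  ⟨φ, hφ, hmax, hderiv.deriv⟩

lemma viscSub1_iff : ViscSub1 E u ↔ ∀ x, ∀ t ∈ superjet u x, E x (u x) t ≤ 0 := by
  refine ⟨fun h x t ⟨φ, hφ, hmax, ht⟩ ↦ ht ▸ h φ hφ x hmax, fun h φ hφ x hmax ↦ ?_⟩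
  exact h x _ ⟨φ, hφ, hmax, rfl⟩

lemma smul_superjet_subset {c : ℝ} (hc : 0 < c) (ht : t ∈ superjet (c • u) x) :
    t / c ∈ superjet u x := by
  obtain ⟨φ, hφ, hmax, rfl⟩ := ht
  refine ⟨fun y ↦ φ y / c, by fun_prop, ?_, deriv_div_const c⟩
  filter_upwards [hmax] with y hy
  simp only [Pi.sub_apply, Pi.smul_apply, smul_eq_mul] at hy ⊢
  have hscale (y : ℝ) : u y - φ y / c = (c * u y - φ y) / c := by field_simp
  rw [hscale, hscale]
  gcongr

/-- The equation satisfied by `-u` when `E x (u x) (u' x) = 0`. -/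
def reflect (E : ℝ → ℝ → ℝ → ℝ) : ℝ → ℝ → ℝ → ℝ := fun x r q ↦ -E x (-r) (-q)

lemma viscSub1_reflect_neg_iff : ViscSub1 (reflect E) (-u) ↔ ViscSuper1 E u := by
  have hext (φ : ℝ → ℝ) (x : ℝ) : IsLocalMax (-u - φ) x ↔ IsLocalMin (u - -φ) x := by
    refine eventually_congr (.of_forall fun y ↦ ?_)
    simp only [Pi.sub_apply, Pi.neg_apply]
    constructor <;> intro h <;> linarith
  constructor
  · intro h φ hφ x hmin
    simpa [reflect, deriv.neg] using h (-φ) hφ.neg x ((hext _ _).2 (by rwa [neg_neg]))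
  · intro h φ hφ x hmax
    simpa [reflect, deriv.neg] using h (-φ) hφ.neg x ((hext _ _).1 hmax)

lemma reflect_reflect : reflect (reflect E) = E := by
  funext x r q
  simp only [reflect, neg_neg]

lemma viscSuper1_reflect_neg_iff : ViscSuper1 (reflect E) (-u) ↔ ViscSub1 E u := by
  rw [← viscSub1_reflect_neg_iff, neg_neg, reflect_reflect]

end Jets

section SumRule

lemma exists_isMaxOn_sub_mul_frequently {X : Type*} [TopologicalSpace X]
    [FirstCountableTopology X] {K : Set X} (hK : IsCompact K) {Φ ψ : X → ℝ} (hΦ : Continuous Φ)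
    (hψ : Continuous ψ) (hψ0 : ∀ v, 0 ≤ ψ v) (hKψ : ∃ v ∈ K, ψ v = 0) :
    ∃ v ∈ K, ψ v = 0 ∧ (∀ y ∈ K, ψ y = 0 → Φ y ≤ Φ v) ∧
      ∃ᶠ w in 𝓝 v, w ∈ K ∧ ∃ c : ℝ, IsMaxOn (fun y ↦ Φ y - c * ψ y) K w := by
  obtain ⟨v₀, hv₀, hψv₀⟩ := hKψ
  have hmax (n : ℕ) : ∃ w ∈ K, IsMaxOn (fun y ↦ Φ y - (n + 1 : ℝ) * ψ y) K w :=
    hK.exists_isMaxOn ⟨v₀, hv₀⟩ (by fun_prop)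
  choose w hwK hw using hmax
  obtain ⟨v, hvK, σ, hσ, hlim⟩ := hK.tendsto_subseq hwK
  have hle (y : X) (hy : y ∈ K) (hψy : ψ y = 0) (n : ℕ) :
      Φ y ≤ Φ (w n) - (n + 1 : ℝ) * ψ (w n) := by
    have := hw n hy
    simpa only [mem_ofPred_eq, hψy, mul_zero, sub_zero] using this
  have hψv : ψ v = 0 := by
    obtain ⟨B, hB⟩ := (hK.image hΦ).bddAbove
    have hbound (n : ℕ) : ψ (w n) ≤ (B - Φ v₀) * (1 / (n + 1 : ℝ)) := by
      rw [mul_one_div, le_div_iff₀ (by positivity)]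
      linarith [hle v₀ hv₀ hψv₀ n, hB (mem_image_of_mem Φ (hwK n))]
    have hzero : Tendsto (fun n ↦ ψ (w n)) atTop (𝓝 0) := by
      refine squeeze_zero (fun n ↦ hψ0 _) hbound ?_
      simpa only [mul_zero] using tendsto_one_div_add_atTop_nhds_zero_nat.const_mul (B - Φ v₀)
    exact tendsto_nhds_unique ((hψ.tendsto v).comp hlim) (hzero.comp hσ.tendsto_atTop)
  refine ⟨v, hvK, hψv, fun y hy hψy ↦ ?_, ?_⟩
  · refine ge_of_tendsto' ((hΦ.tendsto v).comp hlim) fun n ↦ (hle y hy hψy (σ n)).trans ?_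
    exact sub_le_self _ (mul_nonneg (by positivity) (hψ0 _))
  · exact hlim.frequently (.of_forall fun n ↦ ⟨hwK _, _, hw _⟩)

variable {ι : Type*} [Fintype ι] {U : ι → ℝ → ℝ}

/-- The functional of the method of doubling variables for the family `U` with penalization `c`,
parametrized by a base point `v.1` and the offsets `v.2 i` of the variables from it. -/
def doubling (U : ι → ℝ → ℝ) (c : ℝ) (v : ℝ × (ι → ℝ)) : ℝ :=
  ∑ i, U i (v.1 + v.2 i) - c * ∑ i, v.2 i ^ 2

lemma mem_superjet_of_isLocalMax_doubling {z c : ℝ} {a : ι → ℝ}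
    (hmax : IsLocalMax (doubling U c) (z, a)) (i : ι) :
    2 * c * a i ∈ superjet (U i) (z + a i) := by
  classical
  have hsplit (f : ι → ℝ → ℝ) (s : ℝ) :
      ∑ j, f j (Function.update a i s j) = f i s + ∑ j ∈ {i}ᶜ, f j (a j) := by
    rw [Fintype.sum_eq_add_sum_compl i, Function.update_self]
    congr 1
    refine Finset.sum_congr rfl fun j hj ↦ ?_
    rw [Function.update_of_ne (by simpa using hj)]
  let γ : ℝ → ℝ × (ι → ℝ) := fun y ↦ (z, Function.update a i (y - z))
  have hγ : γ (z + a i) = (z, a) := by simp [γ]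
  have hγmax := (hγ ▸ hmax).comp_continuous (g := γ) (b := z + a i) (by fun_prop)
  refine mem_superjet_of_isLocalMax (φ := fun y ↦ c * (y - z) ^ 2) (by fun_prop) ?_ ?_
  · filter_upwards [hγmax] with y hy
    simp only [Function.comp_apply, doubling, γ, hsplit (fun j s ↦ U j (z + s)),
      hsplit (fun _ s ↦ s ^ 2), add_sub_cancel] at hy ⊢
    linarith
  · refine ((((hasDerivAt_id (z + a i)).sub_const z).pow 2).const_mul c).congr_deriv ?_
    simp [mul_comm, mul_left_comm]

lemma sum_eq_zero_of_isLocalMax_doubling {z c : ℝ} {a : ι → ℝ}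
    (hmax : IsLocalMax (doubling U c) (z, a)) : ∑ i, 2 * c * a i = 0 := by
  let γ : ℝ → ℝ × (ι → ℝ) := fun h ↦ (z + h, fun i ↦ a i - h)
  have hγ : γ 0 = (z, a) := by simp [γ]
  have hγmax := (hγ ▸ hmax).comp_continuous (g := γ) (b := 0) (by fun_prop)
  have hpen : HasDerivAt (fun h ↦ c * ∑ i, (a i - h) ^ 2) (-∑ i, 2 * c * a i) 0 := by
    refine ((HasDerivAt.fun_sum fun i (_ : i ∈ Finset.univ) ↦
      ((hasDerivAt_id (0 : ℝ)).const_sub (a i)).pow 2).const_mul c).congr_deriv ?_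
    rw [Finset.mul_sum, ← Finset.sum_neg_distrib]
    exact Finset.sum_congr rfl fun i _ ↦ by simp [mul_comm, mul_left_comm]
  have hmin : IsLocalMin (fun h ↦ c * ∑ i, (a i - h) ^ 2) 0 := by
    filter_upwards [hγmax] with h hh
    simp only [Function.comp_apply, doubling, γ, add_add_sub_cancel] at hh
    linarith
  exact neg_eq_zero.1 (hmin.hasDerivAt_eq_zero hpen)

lemma exists_forall_sum_le_and_frequently_superjet {T : ℝ} (hT : 0 < T)
    (hU : ∀ i, Continuous (U i)) (hper : ∀ i, Function.Periodic (U i) T) :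
    ∃ x₀, (∀ x, ∑ i, U i x ≤ ∑ i, U i x₀) ∧
      ∃ᶠ X in 𝓝 (fun _ : ι ↦ x₀), ∃ s : ι → ℝ, (∀ i, s i ∈ superjet (U i) (X i)) ∧
        ∑ i, s i = 0 := by
  let Φ : ℝ × (ι → ℝ) → ℝ := fun v ↦ ∑ i, U i (v.1 + v.2 i)
  let ψ : ℝ × (ι → ℝ) → ℝ := fun v ↦ ∑ i, v.2 i ^ 2
  have hψ_eq_zero {v : ℝ × (ι → ℝ)} : ψ v = 0 ↔ v.2 = 0 := by
    simp [ψ, Finset.sum_eq_zero_iff_of_nonneg, sq_nonneg, funext_iff]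
  have hreduce (v : ℝ × (ι → ℝ)) : ∃ z ∈ Icc 0 T, Φ (z, v.2) = Φ v := by
    have hΦper : Function.Periodic (fun z ↦ Φ (z, v.2)) T := fun z ↦
      Finset.sum_congr rfl fun i _ ↦ by rw [← hper i (z + v.2 i)]; congr 1; ring
    obtain ⟨z, hz, hΦz⟩ := hΦper.exists_mem_Ico₀ hT v.1
    exact ⟨z, Ico_subset_Icc_self hz, hΦz.symm⟩
  obtain ⟨⟨x₀, a₀⟩, -, ha₀, hmax, hfreq⟩ := exists_isMaxOn_sub_mul_frequently
    (Φ := Φ) (ψ := ψ) ((isCompact_Icc (a := 0) (b := T)).prod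
      (isCompact_closedBall (0 : ι → ℝ) 1)) (by fun_prop) (by fun_prop)
    (fun v ↦ Finset.sum_nonneg fun i _ ↦ sq_nonneg _) ⟨(0, 0), by simp [hT.le], by simp [ψ]⟩
  obtain rfl : a₀ = 0 := hψ_eq_zero.1 ha₀
  refine ⟨x₀, fun x ↦ ?_, ?_⟩
  · obtain ⟨z, hz, hΦz⟩ := hreduce (x, 0)
    simpa [Φ] using hΦz.symm.trans_le (hmax (z, 0) ⟨hz, by simp⟩ (by simp [ψ]))
  have hnhds : ∀ᶠ v : ℝ × (ι → ℝ) in 𝓝 (x₀, 0), v.2 ∈ Metric.ball 0 1 :=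
    continuousAt_snd.eventually (Metric.ball_mem_nhds _ one_pos)
  have hlim : Tendsto (fun (v : ℝ × (ι → ℝ)) i ↦ v.1 + v.2 i) (𝓝 (x₀, 0)) (𝓝 fun _ ↦ x₀) :=
    Continuous.tendsto' (by fun_prop) _ _ (funext fun _ ↦ add_zero x₀)
  refine hlim.frequently ((hfreq.and_eventually hnhds).mono ?_)
  rintro ⟨z, a⟩ ⟨⟨-, c, hza⟩, ha⟩
  have hlocal : IsLocalMax (doubling U c) (z, a) := by
    have hball : ∀ᶠ v : ℝ × (ι → ℝ) in 𝓝 (z, a), v.2 ∈ Metric.ball 0 1 :=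
      continuousAt_snd.eventually (Metric.isOpen_ball.mem_nhds ha)
    filter_upwards [hball] with v hv
    obtain ⟨y, hy, hΦy⟩ := hreduce v
    have hle := hza (show (y, v.2) ∈ _ from ⟨hy, Metric.ball_subset_closedBall hv⟩)
    simp only [mem_ofPred_eq] at hle
    rwa [hΦy] at hle
  exact ⟨fun i ↦ 2 * c * a i, mem_superjet_of_isLocalMax_doubling hlocal,
    sum_eq_zero_of_isLocalMax_doubling hlocal⟩

end SumRule

section PeriodicSolutions

/-- `u` is a continuous `T`-periodic viscosity solution of `E x (u x) (u' x) = 0`. -/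
structure IsPeriodicViscSol (E : ℝ → ℝ → ℝ → ℝ) (T : ℝ) (u : ℝ → ℝ) : Prop where
  continuous : Continuous u
  periodic : Function.Periodic u T
  viscSol : ViscSol1 E u

namespace IsPeriodicViscSol

variable {E : ℝ → ℝ → ℝ → ℝ} {T : ℝ} {u : ℝ → ℝ}

lemma neg (hu : IsPeriodicViscSol E T u) : IsPeriodicViscSol (reflect E) T (-u) where
  continuous := hu.continuous.neg
  periodic x := congrArg Neg.neg (hu.periodic x)
  viscSol := ⟨viscSub1_reflect_neg_iff.2 hu.viscSol.2, viscSuper1_reflect_neg_iff.2 hu.viscSol.1⟩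

lemma exists_nonpos (hu : IsPeriodicViscSol E T u) (hT : 0 < T) : ∃ x, E x (u x) 0 ≤ 0 := by
  obtain ⟨-, ⟨x, rfl⟩, hx⟩ :=
    (hu.periodic.compact_of_continuous hT.ne' hu.continuous).exists_isGreatest (range_nonempty u)
  refine ⟨x, viscSub1_iff.1 hu.viscSol.1 x 0 (mem_superjet_of_isLocalMax
    (φ := fun _ ↦ 0) contDiff_const (.of_forall fun y ↦ ?_) (hasDerivAt_const x 0))⟩
  simpa only [sub_zero] using hx (mem_range_self y)

lemma exists_nonneg (hu : IsPeriodicViscSol E T u) (hT : 0 < T) : ∃ x, 0 ≤ E x (u x) 0 := by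
  simpa [reflect] using hu.neg.exists_nonpos hT

end IsPeriodicViscSol

lemma antitone_of_drift {g : ℝ → ℝ} {T : ℝ} (hT : 0 < T) (hg : Continuous g)
    (hdrift : ∀ x, g (x + T) < g x)
    (hextr : (∀ x, ¬IsLocalMax g x) ∨ ∀ x, ¬IsLocalMin g x) : Antitone g := by
  intro x y hxy
  by_contra! hlt
  have hxy' : x < y := hxy.lt_of_ne fun h ↦ by simp [h] at hlt
  rcases hextr with hmax | hmin
  · obtain ⟨z, -, hz⟩ := isCompact_Icc.exists_isLocalMax_mem_open
      (Ioo_subset_Icc_self (a := x) (b := y + T)) hg.continuousOn ⟨hxy, by linarith⟩ (by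
        rw [Icc_sdiff_Ioo_same (by linarith)]
        rintro _ (rfl | rfl)
        exacts [hlt, hdrift y]) isOpen_Ioo
    exact hmax z hz
  · have hdrift' : g x < g (x - T) := by simpa only [sub_add_cancel] using hdrift (x - T)
    obtain ⟨z, -, hz⟩ := isCompact_Icc.exists_isLocalMin_mem_open
      (Ioo_subset_Icc_self (a := x - T) (b := y)) hg.continuousOn ⟨by linarith, hxy⟩ (by
        rw [Icc_sdiff_Ioo_same (by linarith)]
        rintro _ (rfl | rfl)
        exacts [hdrift', hlt]) isOpen_Ioo
    exact hmin z hz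

namespace IsPeriodicViscSol

variable {E : ℝ → ℝ → ℝ → ℝ} {T κ : ℝ} {u : ℝ → ℝ}

lemma antitone_sub_mul (hu : IsPeriodicViscSol E T u) (hT : 0 < T) (hκ : 0 < κ)
    (hE : (∀ x, 0 < E x (u x) κ) ∨ ∀ x, E x (u x) κ < 0) : Antitone fun x ↦ u x - κ * x := by
  have hlin (x : ℝ) : deriv (fun y ↦ κ * y) x = κ := by simp
  refine antitone_of_drift hT (hu.continuous.sub (by fun_prop)) (fun x ↦ ?_)
    (hE.imp (fun h x hmax ↦ (h x).not_ge ?_) fun h x hmin ↦ (h x).not_ge ?_)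
  · rw [hu.periodic x]
    nlinarith
  · simpa only [hlin] using hu.viscSol.1 (fun y ↦ κ * y) (by fun_prop) x hmax
  · simpa only [hlin] using hu.viscSol.2 (fun y ↦ κ * y) (by fun_prop) x hmin

lemma monotone_sub_mul (hu : IsPeriodicViscSol E T u) (hT : 0 < T) (hκ : κ < 0)
    (hE : (∀ x, 0 < E x (u x) κ) ∨ ∀ x, E x (u x) κ < 0) : Monotone fun x ↦ u x - κ * x := by
  have hanti := hu.neg.antitone_sub_mul hT (neg_pos.2 hκ) (by
    simpa only [reflect, Pi.neg_apply, neg_neg, neg_pos, neg_lt_zero] using hE.symm)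
  intro x y hxy
  have := hanti hxy
  simp only [Pi.neg_apply] at this
  linarith

end IsPeriodicViscSol

section Slopes

variable {u : ℝ → ℝ} {x t κ : ℝ}

lemma le_of_mem_superjet_of_antitone (hu : Antitone fun x ↦ u x - κ * x)
    (ht : t ∈ superjet u x) : t ≤ κ := by
  obtain ⟨φ, hφ, hmax, rfl⟩ := ht
  have hslope := (hasDerivAt_iff_tendsto_slope_left_right.1
    (hφ.differentiable one_ne_zero x).hasDerivAt).1
  refine le_of_tendsto hslope ?_
  filter_upwards [self_mem_nhdsWithin, nhdsWithin_le_nhds hmax] with y hyx hy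
  rw [slope_def_field, div_le_iff_of_neg (sub_neg.2 hyx)]
  have := hu (le_of_lt hyx)
  simp only [Pi.sub_apply] at hy this
  linarith

lemma ge_of_mem_superjet_of_monotone (hu : Monotone fun x ↦ u x - κ * x)
    (ht : t ∈ superjet u x) : κ ≤ t := by
  obtain ⟨φ, hφ, hmax, rfl⟩ := ht
  have hslope := (hasDerivAt_iff_tendsto_slope_left_right.1
    (hφ.differentiable one_ne_zero x).hasDerivAt).2
  refine ge_of_tendsto hslope ?_
  filter_upwards [self_mem_nhdsWithin, nhdsWithin_le_nhds hmax] with y hxy hy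
  rw [slope_def_field, le_div_iff₀ (sub_pos.2 hxy)]
  have := hu (le_of_lt hxy)
  simp only [Pi.sub_apply] at hy this
  linarith

lemma lipschitzWith_of_monotone_of_antitone {a b : ℝ}
    (ha : Monotone fun x ↦ u x - a * x) (hb : Antitone fun x ↦ u x - b * x) :
    LipschitzWith (max (-a) b).toNNReal u := by
  refine LipschitzWith.of_le_add_mul' _ fun x y ↦ ?_
  rcases le_total x y with hxy | hxy
  · have h1 := ha hxy
    rw [dist_comm, Real.dist_eq, abs_of_nonneg (sub_nonneg.2 hxy)]
    simp only at h1
    nlinarith [le_max_left (-a) b]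
  · have h1 := hb hxy
    rw [Real.dist_eq, abs_of_nonneg (sub_nonneg.2 hxy)]
    simp only at h1
    nlinarith [le_max_right (-a) b]

end Slopes

end PeriodicSolutions

section Discounted

/-- The equation `ε * u + G (u') = f`; for `ε = 0` it is the cell problem. -/
def discounted (G f : ℝ → ℝ) (ε : ℝ) : ℝ → ℝ → ℝ → ℝ := fun x r q ↦ ε * r + G q - f x

variable {G f v w z : ℝ → ℝ} {T ε η μ : ℝ}

lemma reflect_discounted :
    reflect (discounted G f ε) = discounted (fun q ↦ -G (-q)) (-f) ε := by
  funext x r q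
  simp only [reflect, discounted, Pi.neg_apply]
  ring

lemma IsPeriodicViscSol.discounted_le (hv : IsPeriodicViscSol (discounted G f ε) T v) {x t : ℝ}
    (ht : t ∈ superjet v x) : G t ≤ f x - ε * v x := by
  have := viscSub1_iff.1 hv.viscSol.1 x t ht
  simp only [discounted] at this
  linarith

lemma IsPeriodicViscSol.discounted_ge (hv : IsPeriodicViscSol (discounted G f ε) T v) {x t : ℝ}
    (ht : t ∈ superjet (-v) x) : f x - ε * v x ≤ G (-t) := by
  have := viscSub1_iff.1 hv.neg.viscSol.1 x t ht
  simp only [reflect, discounted, Pi.neg_apply, neg_neg] at this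
  linarith

lemma exists_isMax_sub_and_mul_le (hT : 0 < T) (hf : Continuous f)
    (hv : IsPeriodicViscSol (discounted G f ε) T v)
    (hz : IsPeriodicViscSol (discounted G f η) T z) :
    ∃ x₀, (∀ x, v x - z x ≤ v x₀ - z x₀) ∧ ε * v x₀ ≤ η * z x₀ := by
  have hvc := hv.continuous
  have hzc := hz.continuous
  obtain ⟨x₀, hmax, hfreq⟩ := exists_forall_sum_le_and_frequently_superjet (U := ![v, -z]) hT
    (Fin.forall_fin_two.2 ⟨hvc, hzc.neg⟩) (Fin.forall_fin_two.2 ⟨hv.periodic, hz.neg.periodic⟩)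
  simp only [Fin.sum_univ_two, Fin.forall_fin_two, Matrix.cons_val_zero, Matrix.cons_val_one,
    Pi.neg_apply, ← sub_eq_add_neg] at hmax hfreq
  have hle : ∃ᶠ X : Fin 2 → ℝ in 𝓝 (fun _ ↦ x₀),
      ε * v (X 0) - f (X 0) ≤ η * z (X 1) - f (X 1) := by
    refine hfreq.mono fun X ⟨s, ⟨hs₀, hs₁⟩, hsum⟩ ↦ ?_
    have h₀ := hv.discounted_le hs₀
    have h₁ := hz.discounted_ge hs₁
    rw [← eq_neg_of_add_eq_zero_left hsum] at h₁
    linarith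
  have hclosed : IsClosed {X : Fin 2 → ℝ | ε * v (X 0) - f (X 0) ≤ η * z (X 1) - f (X 1)} :=
    isClosed_le (by fun_prop) (by fun_prop)
  have := hclosed.mem_of_frequently_of_tendsto hle tendsto_id
  exact ⟨x₀, hmax, (sub_le_sub_iff_right (f x₀)).1 this⟩

lemma abs_le_two_mul_of_cell_solution {M : ℝ} (hT : 0 < T) (hf : Continuous f) (hε : 0 < ε)
    (hw : IsPeriodicViscSol (discounted G f 0) T w) (hM : ∀ x, |w x| ≤ M)
    (hv : IsPeriodicViscSol (discounted G f ε) T v) (x : ℝ) : |v x| ≤ 2 * M := by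
  obtain ⟨y, hy, hvy⟩ := exists_isMax_sub_and_mul_le hT hf hv hw
  obtain ⟨y', hy', hvy'⟩ := exists_isMax_sub_and_mul_le hT hf hw hv
  rw [zero_mul] at hvy hvy'
  have hv_nonpos : v y ≤ 0 := nonpos_of_mul_nonpos_right hvy hε
  have hv_nonneg : 0 ≤ v y' := nonneg_of_mul_nonneg_right hvy' hε
  have hx := abs_le.1 (hM x)
  rw [abs_le]
  constructor
  · linarith [hy' x, (abs_le.1 (hM y')).2]
  · linarith [hy x, (abs_le.1 (hM y)).1]

section Convex

variable {a b K θ : ℝ} (hK : 0 < K)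
  (hconv : ConvexOn ℝ (Icc a b) fun q ↦ Real.exp (K * G q)) (hθ : θ ∈ Ioo 0 1)
  (hv : IsPeriodicViscSol (discounted G f ε) T v) (hvslope : ∀ x, superjet v x ⊆ Icc a b)
  (hw : IsPeriodicViscSol (discounted G f μ) T w) (hwslope : ∀ x, superjet w x ⊆ Icc a b)
  (hz : IsPeriodicViscSol (discounted G f η) T z)

include hK hconv hθ hv hvslope hw hwslope hz

lemma exp_le_of_superjet_sum_eq_zero {x₁ x₂ x₃ s₁ s₂ s₃ : ℝ} (hs₁ : s₁ ∈ superjet (θ • v) x₁)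
    (hs₂ : s₂ ∈ superjet ((1 - θ) • w) x₂) (hs₃ : s₃ ∈ superjet (-z) x₃)
    (hsum : s₁ + s₂ + s₃ = 0) :
    Real.exp (K * (f x₃ - η * z x₃)) ≤
      θ * Real.exp (K * (f x₁ - ε * v x₁)) + (1 - θ) * Real.exp (K * (f x₂ - μ * w x₂)) := by
  have hθ₀ : 0 < θ := hθ.1
  have hθ₁ : 0 < 1 - θ := sub_pos.2 hθ.2
  replace hs₁ := smul_superjet_subset hθ₀ hs₁
  replace hs₂ := smul_superjet_subset hθ₁ hs₂
  have hcomb : -s₃ = θ • (s₁ / θ) + (1 - θ) • (s₂ / (1 - θ)) := by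
    simp only [smul_eq_mul]
    field_simp
    linarith
  calc Real.exp (K * (f x₃ - η * z x₃)) ≤ Real.exp (K * G (-s₃)) := by
        gcongr
        exact hz.discounted_ge hs₃
    _ ≤ θ * Real.exp (K * G (s₁ / θ)) + (1 - θ) * Real.exp (K * G (s₂ / (1 - θ))) := by
        rw [hcomb]
        exact hconv.2 (hvslope _ hs₁) (hwslope _ hs₂) hθ₀.le hθ₁.le (by ring)
    _ ≤ _ := by
        gcongr
        · exact hv.discounted_le hs₁
        · exact hw.discounted_le hs₂

lemma exists_isMax_and_exp_le (hT : 0 < T) (hf : Continuous f) :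
    ∃ x₀, (∀ x, θ * v x + (1 - θ) * w x - z x ≤ θ * v x₀ + (1 - θ) * w x₀ - z x₀) ∧
      Real.exp (-(K * (η * z x₀))) ≤
        θ * Real.exp (-(K * (ε * v x₀))) + (1 - θ) * Real.exp (-(K * (μ * w x₀))) := by
  have hvc := hv.continuous
  have hwc := hw.continuous
  have hzc := hz.continuous
  obtain ⟨x₀, hmax, hfreq⟩ := exists_forall_sum_le_and_frequently_superjet
    (U := ![θ • v, (1 - θ) • w, -z]) hT
    (fun i ↦ by
      fin_cases i
      exacts [hvc.const_smul θ, hwc.const_smul (1 - θ), hzc.neg])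
    (fun i ↦ by
      fin_cases i
      exacts [hv.periodic.smul θ, hw.periodic.smul (1 - θ), hz.neg.periodic])
  simp only [Fin.sum_univ_three, Fin.forall_fin_succ, IsEmpty.forall_iff, and_true,
    Fin.succ_zero_eq_one, Fin.succ_one_eq_two, Matrix.cons_val_zero, Matrix.cons_val_one,
    Matrix.cons_val, Pi.smul_apply, Pi.neg_apply, smul_eq_mul, ← sub_eq_add_neg] at hmax hfreq
  have hclosed : IsClosed {X : Fin 3 → ℝ | Real.exp (K * (f (X 2) - η * z (X 2))) ≤
      θ * Real.exp (K * (f (X 0) - ε * v (X 0))) +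
        (1 - θ) * Real.exp (K * (f (X 1) - μ * w (X 1)))} :=
    isClosed_le (by fun_prop) (by fun_prop)
  have hle := hclosed.mem_of_frequently_of_tendsto (hfreq.mono fun X ⟨s, ⟨hs₁, hs₂, hs₃⟩, hsum⟩ ↦
    exp_le_of_superjet_sum_eq_zero hK hconv hθ hv hvslope hw hwslope hz hs₁ hs₂ hs₃ hsum)
    tendsto_id
  refine ⟨x₀, hmax, le_of_mul_le_mul_right ?_ (Real.exp_pos (K * f x₀))⟩
  have hfactor (r : ℝ) :
      Real.exp (-(K * r)) * Real.exp (K * f x₀) = Real.exp (K * (f x₀ - r)) := by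
    rw [← Real.exp_add]
    ring_nf
  rw [add_mul, mul_assoc, mul_assoc, hfactor, hfactor, hfactor]
  exact hle

end Convex

lemma sub_mul_sq_le_of_exp_le {θ e r s : ℝ} (hθ : 0 < θ) (he : 0 < e) (hr : |e * r| ≤ 1)
    (h : Real.exp (-(θ * e * s)) ≤ θ * Real.exp (-(e * r)) + (1 - θ)) : r - e * r ^ 2 ≤ s := by
  have hlower : -(θ * e * s) + 1 ≤ Real.exp (-(θ * e * s)) := Real.add_one_le_exp _
  have hupper : Real.exp (-(e * r)) ≤ 1 - e * r + (e * r) ^ 2 := by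
    have := Real.abs_exp_sub_one_sub_id_le (x := -(e * r)) (by rwa [abs_neg])
    linarith [(abs_le.1 this).2]
  have hscaled : θ * e * (r - e * r ^ 2) ≤ θ * e * s := by
    linarith [mul_le_mul_of_nonneg_left hupper hθ.le]
  exact le_of_mul_le_mul_left hscaled (mul_pos hθ he)

lemma sub_two_mul_le_of_cell_solution {a b K θ C δ : ℝ} (hT : 0 < T) (hf : Continuous f)
    (hK : 0 < K) (hconv : ConvexOn ℝ (Icc a b) fun q ↦ Real.exp (K * G q))
    (hθ : θ ∈ Ioo 0 1) (hε : 0 < ε)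
    (hv : IsPeriodicViscSol (discounted G f ε) T v) (hvslope : ∀ x, superjet v x ⊆ Icc a b)
    (hw : IsPeriodicViscSol (discounted G f 0) T w) (hwslope : ∀ x, superjet w x ⊆ Icc a b)
    (hz : IsPeriodicViscSol (discounted G f (θ * ε)) T z)
    (hvC : ∀ x, |v x| ≤ C) (hC : K * ε * C ≤ 1) (hCδ : K * ε * C ^ 2 ≤ δ)
    (hδ : ∀ x, |w x - v x| ≤ δ) (x : ℝ) : w x - 2 * δ ≤ z x := by
  obtain ⟨x₀, hmax, hexp⟩ :=
    exists_isMax_and_exp_le hK hconv hθ hv hvslope hw hwslope hz hT hf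
  have he : 0 < K * ε := mul_pos hK hε
  have hz₀ : v x₀ - δ ≤ z x₀ := by
    have hsmall : |K * ε * v x₀| ≤ 1 := by
      rw [abs_mul, abs_of_pos he]
      exact (mul_le_mul_of_nonneg_left (hvC x₀) he.le).trans hC
    have hquad : K * ε * v x₀ ^ 2 ≤ δ :=
      (mul_le_mul_of_nonneg_left (sq_le_sq.2 ((hvC x₀).trans (le_abs_self C))) he.le).trans hCδ
    have := sub_mul_sq_le_of_exp_le (s := z x₀) hθ.1 he hsmall
      (by simpa [mul_assoc, mul_left_comm] using hexp)
    linarith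
  have hx₀ : (1 - θ) * (w x₀ - v x₀) ≤ (1 - θ) * δ :=
    mul_le_mul_of_nonneg_left (abs_le.1 (hδ x₀)).2 (sub_nonneg.2 hθ.2.le)
  have hx : θ * (w x - v x) ≤ θ * δ := mul_le_mul_of_nonneg_left (abs_le.1 (hδ x)).2 hθ.1.le
  linarith [hmax x]

end Discounted

section Barrier

variable {G f : ℝ → ℝ} {T α β a b κ : ℝ}

lemma eventually_discounted_pos_or_neg (hf : ∀ x, f x ∈ Icc α β) (hκ : G κ ∉ Icc α β) (C : ℝ) :
    ∀ᶠ ε in 𝓝 (0 : ℝ), (∀ x r, |r| ≤ C → 0 < discounted G f ε x r κ) ∨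
      ∀ x r, |r| ≤ C → discounted G f ε x r κ < 0 := by
  have hsmall {c : ℝ} (hc : 0 < c) : ∀ᶠ ε in 𝓝 (0 : ℝ), |ε| * C < c :=
    (Continuous.tendsto' (by fun_prop) (0 : ℝ) 0 (by simp)).eventually_lt_const hc
  have hbound {ε r : ℝ} (hr : |r| ≤ C) : |ε * r| ≤ |ε| * C := by
    rw [abs_mul]
    gcongr
  rw [mem_Icc, not_and_or, not_le, not_le] at hκ
  rcases hκ with hlt | hgt
  · filter_upwards [hsmall (sub_pos.2 hlt)] with ε hε
    refine .inr fun x r hr ↦ ?_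
    simp only [discounted]
    linarith [(abs_le.1 (hbound hr (ε := ε))).2, (hf x).1]
  · filter_upwards [hsmall (sub_pos.2 hgt)] with ε hε
    refine .inl fun x r hr ↦ ?_
    simp only [discounted]
    linarith [(abs_le.1 (hbound hr (ε := ε))).1, (hf x).2]

lemma eventually_superjet_subset_and_lipschitzWith (hT : 0 < T) (hf : ∀ x, f x ∈ Icc α β)
    (ha : a < 0) (hb : 0 < b) (hGa : G a ∉ Icc α β) (hGb : G b ∉ Icc α β) (C : ℝ) :
    ∀ᶠ ε in 𝓝 (0 : ℝ), ∀ v, IsPeriodicViscSol (discounted G f ε) T v → (∀ x, |v x| ≤ C) →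
      (∀ x, superjet v x ⊆ Icc a b) ∧ LipschitzWith (max (-a) b).toNNReal v := by
  filter_upwards [eventually_discounted_pos_or_neg hf hGa C,
    eventually_discounted_pos_or_neg hf hGb C] with ε hεa hεb v hv hvC
  have hmono := hv.monotone_sub_mul hT ha
    (hεa.imp (fun h x ↦ h x _ (hvC x)) fun h x ↦ h x _ (hvC x))
  have hanti := hv.antitone_sub_mul hT hb
    (hεb.imp (fun h x ↦ h x _ (hvC x)) fun h x ↦ h x _ (hvC x))
  exact ⟨fun x t ht ↦ ⟨ge_of_mem_superjet_of_monotone hmono ht,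
    le_of_mem_superjet_of_antitone hanti ht⟩, lipschitzWith_of_monotone_of_antitone hmono hanti⟩

end Barrier

section Stability

variable {ι : Type*} {l : Filter ι} {W : ι → ℝ → ℝ} {w : ℝ → ℝ}

lemma eventually_exists_isLocalMax_of_tendsto {g : ι → ℝ → ℝ} {g₀ : ℝ → ℝ}
    (hg : ∀ᶠ i in l, Continuous (g i)) (hlim : ∀ y, Tendsto (fun i ↦ g i y) l (𝓝 (g₀ y)))
    {x c d : ℝ} (hx : x ∈ Ioo c d) (hc : g₀ c < g₀ x) (hd : g₀ d < g₀ x) :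
    ∀ᶠ i in l, ∃ y ∈ Ioo c d, IsLocalMax (g i) y := by
  filter_upwards [hg, (hlim c).eventually_lt (hlim x) hc, (hlim d).eventually_lt (hlim x) hd]
    with i hi hci hdi
  refine isCompact_Icc.exists_isLocalMax_mem_open Ioo_subset_Icc_self hi.continuousOn
    (Ioo_subset_Icc_self hx) ?_ isOpen_Ioo
  rw [Icc_sdiff_Ioo_same (hx.1.trans hx.2).le]
  rintro _ (rfl | rfl)
  exacts [hci, hdi]

lemma eventually_exists_mem_superjet (hW : ∀ᶠ i in l, Continuous (W i))
    (hlim : ∀ y, Tendsto (fun i ↦ W i y) l (𝓝 (w y))) {x t : ℝ} (ht : t ∈ superjet w x)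
    {s : Set (ℝ × ℝ)} (hs : s ∈ 𝓝 (x, t)) : ∀ᶠ i in l, ∃ v ∈ s, v.2 ∈ superjet (W i) v.1 := by
  obtain ⟨φ, hφ, hmax, rfl⟩ := ht
  let χ : ℝ → ℝ := fun y ↦ φ y + (y - x) ^ 2
  have hχ : ContDiff ℝ 1 χ := by fun_prop
  have hχ' : deriv χ x = deriv φ x := by
    have hderiv : HasDerivAt χ (deriv φ x) x :=
      ((hφ.differentiable one_ne_zero x).hasDerivAt.add
        (((hasDerivAt_id x).sub_const x).pow 2)).congr_deriv (by simp)
    exact hderiv.deriv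
  have hcurve : ∀ᶠ y in 𝓝 x, (y, deriv χ y) ∈ s :=
    (continuous_id.prodMk (hχ.continuous_deriv le_rfl)).continuousAt.eventually (by simpa [hχ'])
  obtain ⟨r, hr, hball⟩ := Metric.eventually_nhds_iff.1 (hcurve.and hmax)
  have hstrict {y : ℝ} (hy : |y - x| = r / 2) : w y - χ y < w x - χ x := by
    have hle := (hball (y := y) (by rw [Real.dist_eq, hy]; linarith)).2
    have hsq : 0 < (y - x) ^ 2 := by rw [← sq_abs, hy]; positivity
    simp only [Pi.sub_apply] at hle
    simp only [χ, sub_self]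
    linarith
  filter_upwards [eventually_exists_isLocalMax_of_tendsto (g := fun i ↦ W i - χ)
    (g₀ := fun y ↦ w y - χ y) (hW.mono fun i hi ↦ hi.sub hχ.continuous)
    (fun y ↦ (hlim y).sub_const (χ y)) (x := x) (c := x - r / 2) (d := x + r / 2)
    ⟨by linarith, by linarith⟩ (hstrict (by simp [(half_pos hr).le]))
    (hstrict (by simp [(half_pos hr).le]))] with i ⟨y, hy, hyW⟩
  have hyx : |y - x| < r := by
    rw [abs_lt]
    constructor <;> linarith [hy.1, hy.2]
  exact ⟨(y, deriv χ y), (hball hyx).1, χ, hχ, hyW, rfl⟩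

variable [l.NeBot] {A : Type*} [TopologicalSpace A] {E : A → ℝ → ℝ → ℝ → ℝ} {a : A} {g : ι → A}

lemma viscSub1_of_tendstoUniformly
    (hE : Continuous fun v : A × ℝ × ℝ × ℝ ↦ E v.1 v.2.1 v.2.2.1 v.2.2.2)
    (hg : Tendsto g l (𝓝 a)) (hw : Continuous w) (hW : ∀ᶠ i in l, Continuous (W i))
    (hlim : TendstoUniformly W w l) (hsub : ∀ᶠ i in l, ViscSub1 (E (g i)) (W i)) :
    ViscSub1 (E a) w := by
  refine viscSub1_iff.2 fun x t ht ↦ ?_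
  by_contra! hpos
  have hval : Tendsto (fun v : ι × ℝ × ℝ ↦ W v.1 v.2.1) (l ×ˢ 𝓝 (x, t)) (𝓝 (w x)) :=
    TendstoUniformly.tendsto_comp (F := fun v : ι × ℝ × ℝ ↦ W v.1) (g := fun v ↦ v.2.1)
      (fun u hu ↦ tendsto_fst.eventually (hlim u hu)) hw.continuousAt
      (continuous_fst.continuousAt.tendsto.comp tendsto_snd)
  have hlimE : Tendsto (fun v : ι × ℝ × ℝ ↦ E (g v.1) v.2.1 (W v.1 v.2.1) v.2.2) (l ×ˢ 𝓝 (x, t))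
      (𝓝 (E a x (w x) t)) :=
    (hE.tendsto (a, x, w x, t)).comp ((hg.comp tendsto_fst).prodMk_nhds
      ((continuous_fst.continuousAt.tendsto.comp tendsto_snd).prodMk_nhds
        (hval.prodMk_nhds (continuous_snd.continuousAt.tendsto.comp tendsto_snd))))
  obtain ⟨p, hp, q, hq, hpq⟩ := eventually_prod_iff.1 (hlimE.eventually_const_lt hpos)
  obtain ⟨i, hpi, hi, v, hv, hjet⟩ :=
    (hp.and (hsub.and (eventually_exists_mem_superjet hW hlim.tendsto_at ht hq))).exists
  exact (hpq hpi hv).not_ge (viscSub1_iff.1 hi _ _ hjet)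

lemma isPeriodicViscSol_of_tendstoUniformly {T : ℝ}
    (hE : Continuous fun v : A × ℝ × ℝ × ℝ ↦ E v.1 v.2.1 v.2.2.1 v.2.2.2)
    (hg : Tendsto g l (𝓝 a)) (hlim : TendstoUniformly W w l)
    (hW : ∀ᶠ i in l, IsPeriodicViscSol (E (g i)) T (W i)) : IsPeriodicViscSol (E a) T w := by
  have hWc : ∀ᶠ i in l, Continuous (W i) := hW.mono fun i hi ↦ hi.continuous
  have hw : Continuous w := hlim.continuous hWc.frequently
  refine ⟨hw, fun x ↦ ?_, ?_, ?_⟩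
  · refine tendsto_nhds_unique_of_eventuallyEq (hlim.tendsto_at (x + T)) (hlim.tendsto_at x) ?_
    filter_upwards [hW] with i hi using hi.periodic x
  · exact viscSub1_of_tendstoUniformly hE hg hw hWc hlim (hW.mono fun i hi ↦ hi.viscSol.1)
  · refine viscSub1_reflect_neg_iff.1 (viscSub1_of_tendstoUniformly
      (E := fun c ↦ reflect (E c)) (W := fun i ↦ -W i) ?_ hg hw.neg
      (hWc.mono fun i hi ↦ hi.neg) ?_ (hW.mono fun i hi ↦ hi.neg.viscSol.1))
    · exact (hE.comp (by fun_prop : Continuous fun v : A × ℝ × ℝ × ℝ ↦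
        (v.1, v.2.1, -v.2.2.1, -v.2.2.2))).neg
    · exact uniformContinuous_neg.comp_tendstoUniformly hlim

end Stability

section Compactness

variable {ι : Type*} {l : Filter ι} {W : ι → ℝ → ℝ} {w : ℝ → ℝ} {Λ : NNReal} {T : ℝ}

lemma lipschitzWith_of_tendsto [l.NeBot] (hW : ∀ᶠ i in l, LipschitzWith Λ (W i))
    (hlim : ∀ x, Tendsto (fun i ↦ W i x) l (𝓝 (w x))) : LipschitzWith Λ w :=
  (isClosed_setOfPred_lipschitzWith Λ).mem_of_tendsto (tendsto_pi_nhds.2 hlim) hW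

lemma tendstoLocallyUniformly_of_lipschitzWith [l.NeBot]
    (hW : ∀ᶠ i in l, LipschitzWith Λ (W i)) (hlim : ∀ x, Tendsto (fun i ↦ W i x) l (𝓝 (w x))) :
    TendstoLocallyUniformly W w l := by
  refine Metric.tendstoLocallyUniformly_iff.2 fun ε hε x ↦ ?_
  have hsmall : ∀ᶠ y in 𝓝 x, Λ * dist x y < ε / 3 :=
    (Continuous.tendsto' (by fun_prop) x 0 (by simp)).eventually_lt_const (by positivity)
  refine ⟨_, hsmall, ?_⟩
  filter_upwards [hW, Metric.tendsto_nhds.1 (hlim x) (ε / 3) (by positivity)] with i hi hix y hy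
  have hwxy := (lipschitzWith_of_tendsto hW hlim).dist_le_mul y x
  have hixy := hi.dist_le_mul x y
  rw [dist_comm y x] at hwxy
  rw [dist_comm] at hix
  calc dist (w y) (W i y) ≤ dist (w y) (w x) + dist (w x) (W i x) + dist (W i x) (W i y) :=
        dist_triangle4 _ _ _ _
    _ < ε := by linarith [show Λ * dist x y < ε / 3 from hy]

lemma tendstoUniformly_of_periodic (hT : 0 < T) (hW : ∀ᶠ i in l, Function.Periodic (W i) T)
    (hw : Function.Periodic w T) (hlim : TendstoUniformlyOn W w l (Icc 0 T)) :
    TendstoUniformly W w l := by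
  intro s hs
  filter_upwards [hW, hlim s hs] with i hi his x
  have hpair : Function.Periodic (fun x ↦ (w x, W i x)) T := fun x ↦ Prod.ext (hw x) (hi x)
  obtain ⟨y, hy, hxy⟩ := hpair.exists_mem_Ico₀ hT x
  exact hxy ▸ his y (Ico_subset_Icc_self hy)

lemma exists_tendsto_of_ultrafilter {C : ℝ} (U : Ultrafilter ι)
    (hW : ∀ᶠ i in U, ∀ x, |W i x| ≤ C) :
    ∃ w : ℝ → ℝ, ∀ x, Tendsto (fun i ↦ W i x) U (𝓝 (w x)) := by
  have hcompact := isCompact_univ_pi fun _ : ℝ ↦ isCompact_Icc (a := -C) (b := C)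
  obtain ⟨w, -, hw⟩ := hcompact.ultrafilter_le_nhds (U.map W) (by
    rw [le_principal_iff, Ultrafilter.coe_map, mem_map]
    filter_upwards [hW] with i hi x _ using abs_le.1 (hi x))
  exact ⟨w, tendsto_pi_nhds.1 hw⟩

lemma exists_tendstoUniformly_of_ultrafilter {C : ℝ} (hT : 0 < T) (U : Ultrafilter ι)
    (hWC : ∀ᶠ i in U, ∀ x, |W i x| ≤ C) (hWΛ : ∀ᶠ i in U, LipschitzWith Λ (W i))
    (hWT : ∀ᶠ i in U, Function.Periodic (W i) T) :
    ∃ w : ℝ → ℝ, TendstoUniformly W w U := by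
  obtain ⟨w, hw⟩ := exists_tendsto_of_ultrafilter U hWC
  have hwT : Function.Periodic w T := fun x ↦
    tendsto_nhds_unique_of_eventuallyEq (hw (x + T)) (hw x) (hWT.mono fun i hi ↦ hi x)
  refine ⟨w, tendstoUniformly_of_periodic hT hWT hwT ?_⟩
  exact (tendstoLocallyUniformlyOn_iff_tendstoUniformlyOn_of_compact isCompact_Icc).1
    (tendstoLocallyUniformly_of_lipschitzWith hWΛ hw).tendstoLocallyUniformlyOn

lemma exists_tendstoUniformly_of_forall_ultrafilter {X Y : Type*} [UniformSpace Y] [l.NeBot]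
    {W : ι → X → Y}
    (hlim : ∀ U : Ultrafilter ι, ↑U ≤ l → ∃ w, TendstoUniformly W w U)
    (huniq : ∀ U U' : Ultrafilter ι, ↑U ≤ l → ↑U' ≤ l → ∀ w w', TendstoUniformly W w U →
      TendstoUniformly W w' U' → w = w') : ∃ w, TendstoUniformly W w l := by
  obtain ⟨w, hw⟩ := hlim _ (Ultrafilter.of_le l)
  refine ⟨w, ?_⟩
  intro s hs
  refine mem_iff_ultrafilter.2 fun U hU ↦ ?_
  obtain ⟨w', hw'⟩ := hlim U hU
  rw [huniq _ _ (Ultrafilter.of_le l) hU w w' hw hw']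
  exact hw' s hs

end Compactness

section Convergence

variable {G f : ℝ → ℝ} {T α β a b C K : ℝ} {v : ℝ → ℝ → ℝ} {l l' : Filter ℝ} {w w' : ℝ → ℝ}

lemma isPeriodicViscSol_cell_of_tendstoUniformly [l.NeBot] (hl : l ≤ 𝓝[>] 0) (hG : Continuous G)
    (hf : Continuous f) (hv : ∀ ε, 0 < ε → IsPeriodicViscSol (discounted G f ε) T (v ε))
    (hlim : TendstoUniformly v w l) : IsPeriodicViscSol (discounted G f 0) T w :=
  isPeriodicViscSol_of_tendstoUniformly (E := discounted G f) (by unfold discounted; fun_prop)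
    (hl.trans nhdsWithin_le_nhds) hlim (hl (eventually_mem_nhdsWithin.mono hv))

variable (hT : 0 < T) (hG : Continuous G) (hf : Continuous f) (hfαβ : ∀ x, f x ∈ Icc α β)
  (ha : a < 0) (hb : 0 < b) (hGa : G a ∉ Icc α β) (hGb : G b ∉ Icc α β) (hK : 0 < K)
  (hconv : ConvexOn ℝ (Icc a b) fun q ↦ Real.exp (K * G q))
  (hv : ∀ ε, 0 < ε → IsPeriodicViscSol (discounted G f ε) T (v ε))

include hT hG hf hfαβ ha hb hGa hGb hK hconv hv

lemma limit_le_limit_of_convexOn_exp [l.NeBot] [l'.NeBot] (hl : l ≤ 𝓝[>] 0)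
    (hl' : l' ≤ 𝓝[>] 0) (hvC : ∀ ε, 0 < ε → ∀ x, |v ε x| ≤ C) (hlim : TendstoUniformly v w l)
    (hlim' : TendstoUniformly v w' l') (x : ℝ) : w x ≤ w' x := by
  have hpos : ∀ᶠ ε in 𝓝[>] (0 : ℝ), 0 < ε := self_mem_nhdsWithin
  have hw := isPeriodicViscSol_cell_of_tendstoUniformly hl hG hf hv hlim
  have hwC (x : ℝ) : |w x| ≤ C :=
    le_of_tendsto (hlim.tendsto_at x).abs ((hpos.filter_mono hl).mono fun ε hε ↦ hvC ε hε x)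
  have hslope := eventually_superjet_subset_and_lipschitzWith hT hfαβ ha hb hGa hGb C
  have hwslope := (hslope.self_of_nhds w hw hwC).1
  suffices h : ∀ δ > 0, w x - 2 * δ ≤ w' x by
    refine le_of_forall_pos_sub_le fun δ hδ ↦ ?_
    simpa [mul_div_cancel₀] using h (δ / 2) (half_pos hδ)
  intro δ hδ
  have hsmall (c : ℝ) {r : ℝ} (hr : 0 < r) : ∀ᶠ ε in 𝓝 (0 : ℝ), K * ε * c < r :=
    (Continuous.tendsto' (by fun_prop) (0 : ℝ) 0 (by simp)).eventually_lt_const hr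
  obtain ⟨ε, hε, hεC, hεCδ, hvslope, hεδ⟩ : ∃ ε, 0 < ε ∧ K * ε * C ≤ 1 ∧ K * ε * C ^ 2 ≤ δ ∧
      (∀ y, superjet (v ε) y ⊆ Icc a b) ∧ ∀ y, |w y - v ε y| ≤ δ := by
    have hl₀ : l ≤ 𝓝 0 := hl.trans nhdsWithin_le_nhds
    refine Eventually.exists (f := l) ?_
    filter_upwards [hpos.filter_mono hl, (hsmall C one_pos).filter_mono hl₀,
      (hsmall (C ^ 2) hδ).filter_mono hl₀, hslope.filter_mono hl₀,
      Metric.tendstoUniformly_iff.1 hlim δ hδ] with ε hε hεC hεCδ hεslope hεδ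
    exact ⟨hε, hεC.le, hεCδ.le, (hεslope _ (hv ε hε) (hvC ε hε)).1, fun y ↦ (hεδ y).le⟩
  refine ge_of_tendsto (hlim'.tendsto_at x) (hl' ?_)
  filter_upwards [Ioo_mem_nhdsGT hε] with η hη
  have hθ : η / ε ∈ Ioo 0 1 := ⟨div_pos hη.1 hε, (div_lt_one hε).2 hη.2⟩
  exact sub_two_mul_le_of_cell_solution hT hf hK hconv hθ hε (hv ε hε) hvslope hw hwslope
    (by rw [div_mul_cancel₀ _ hε.ne']; exact hv η hη.1) (hvC ε hε) hεC hεCδ hεδ x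

theorem exists_tendstoUniformly_of_convexOn_exp
    (hcell : ∃ w, IsPeriodicViscSol (discounted G f 0) T w) :
    ∃ w, IsPeriodicViscSol (discounted G f 0) T w ∧ TendstoUniformly v w (𝓝[>] 0) := by
  obtain ⟨w₀, hw₀⟩ := hcell
  obtain ⟨M, hM⟩ := (hw₀.periodic.isBounded_of_continuous hT.ne' hw₀.continuous).exists_norm_le
  have hvC (ε : ℝ) (hε : 0 < ε) (x : ℝ) : |v ε x| ≤ 2 * M :=
    abs_le_two_mul_of_cell_solution hT hf hε hw₀ (fun y ↦ hM _ (mem_range_self y)) (hv ε hε) x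
  have hpos : ∀ᶠ ε in 𝓝[>] (0 : ℝ), 0 < ε := self_mem_nhdsWithin
  have hlip := eventually_superjet_subset_and_lipschitzWith hT hfαβ ha hb hGa hGb (2 * M)
  suffices h : ∃ w, TendstoUniformly v w (𝓝[>] 0) by
    obtain ⟨w, hw⟩ := h
    exact ⟨w, isPeriodicViscSol_cell_of_tendstoUniformly le_rfl hG hf hv hw, hw⟩
  refine exists_tendstoUniformly_of_forall_ultrafilter (fun U hU ↦ ?_)
    fun U U' hU hU' w w' hw hw' ↦ funext fun x ↦ ?_
  · have hposU := hpos.filter_mono hU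
    refine exists_tendstoUniformly_of_ultrafilter hT U (hposU.mono hvC)
      (Λ := (max (-a) b).toNNReal) ?_ (hposU.mono fun ε hε ↦ (hv ε hε).periodic)
    filter_upwards [hposU, hlip.filter_mono (hU.trans nhdsWithin_le_nhds)] with ε hε hεlip
    exact (hεlip _ (hv ε hε) (hvC ε hε)).2
  · exact le_antisymm
      (limit_le_limit_of_convexOn_exp hT hG hf hfαβ ha hb hGa hGb hK hconv hv hU hU' hvC hw hw' x)
      (limit_le_limit_of_convexOn_exp hT hG hf hfαβ ha hb hGa hGb hK hconv hv hU' hU hvC hw' hw x)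

end Convergence

section ExpConvexity

lemma exists_forall_pos_add_mul {X : Type*} [TopologicalSpace X] {s : Set X} (hs : IsCompact s)
    {g h : X → ℝ} (hg : Continuous g) (hh : Continuous h) (hg0 : ∀ x ∈ s, 0 ≤ g x)
    (hpos : ∀ x ∈ s, g x = 0 → 0 < h x) : ∃ K > 0, ∀ x ∈ s, 0 < h x + K * g x := by
  suffices hev : ∀ᶠ K in atTop, ∀ x ∈ s, 0 < h x + K * g x from
    ((eventually_gt_atTop 0).and hev).exists
  suffices hev : ∀ᶠ K in atTop, ∀ x ∈ s, 0 ≤ g x → 0 < h x + K * g x from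
    hev.mono fun K hK x hx ↦ hK x hx (hg0 x hx)
  refine hs.induction_on (p := fun t ↦ ∀ᶠ K in atTop, ∀ x ∈ t, 0 ≤ g x → 0 < h x + K * g x)
    (by simp) (fun t t' htt' ht' ↦ ht'.mono fun K hK x hx ↦ hK x (htt' hx))
    (fun t t' ht ht' ↦ ?_) fun x hx ↦ ?_
  · filter_upwards [ht, ht'] with K hK hK' x hx using hx.elim (hK x) (hK' x)
  · obtain ⟨K₀, hK₀⟩ : ∃ K₀, 0 < h x + K₀ * g x := by
      rcases (hg0 x hx).eq_or_lt' with hgx | hgx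
      · exact ⟨0, by simpa using hpos x hx hgx⟩
      · exact ⟨(1 - h x) / g x, by rw [div_mul_cancel₀ _ hgx.ne']; linarith⟩
    have hnhds : ∀ᶠ y in 𝓝 x, 0 < h y + K₀ * g y :=
      (hh.add (continuous_const.mul hg)).tendsto x |>.eventually_const_lt hK₀
    refine ⟨_, mem_nhdsWithin_of_mem_nhds hnhds, ?_⟩
    filter_upwards [eventually_ge_atTop K₀] with K hK y hy hgy
    exact (show 0 < h y + K₀ * g y from hy).trans_le (by gcongr)

variable {G : ℝ → ℝ} {K a b : ℝ}

lemma convexOn_exp_mul {s : Set ℝ} (hs : Convex ℝ s) (hG : ContDiff ℝ 2 G) (hK : 0 ≤ K)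
    (h : ∀ q ∈ s, 0 ≤ deriv (deriv G) q + K * deriv G q ^ 2) :
    ConvexOn ℝ s fun q ↦ Real.exp (K * G q) := by
  have hG' : ContDiff ℝ 1 (deriv G) := hG.deriv'
  have hderiv (q : ℝ) :
      HasDerivAt (fun q ↦ Real.exp (K * G q)) (Real.exp (K * G q) * (K * deriv G q)) q :=
    ((hG.differentiable two_ne_zero q).hasDerivAt.const_mul K).exp
  have hderiv₂ (q : ℝ) : HasDerivAt (fun q ↦ Real.exp (K * G q) * (K * deriv G q))
      (Real.exp (K * G q) * K * (deriv (deriv G) q + K * deriv G q ^ 2)) q :=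
    ((hderiv q).mul ((hG'.differentiable one_ne_zero q).hasDerivAt.const_mul K)).congr_deriv
      (by ring)
  refine convexOn_of_hasDerivWithinAt2_nonneg hs
    (HasDerivAt.continuousOn fun q _ ↦ hderiv q) (fun q _ ↦ (hderiv q).hasDerivWithinAt)
    (fun q _ ↦ (hderiv₂ q).hasDerivWithinAt) fun q hq ↦ ?_
  have := h q (interior_subset hq)
  positivity

lemma exists_convexOn_exp_mul (hG : ContDiff ℝ 2 G)
    (hcrit : ∀ q ∈ Icc a b, deriv G q = 0 → 0 < deriv (deriv G) q) :
    ∃ K > 0, ConvexOn ℝ (Icc a b) fun q ↦ Real.exp (K * G q) := by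
  have hG' : ContDiff ℝ 1 (deriv G) := hG.deriv'
  obtain ⟨K, hK, h⟩ := exists_forall_pos_add_mul isCompact_Icc (g := fun q ↦ deriv G q ^ 2)
    (hG'.continuous.pow 2) (hG'.continuous_deriv le_rfl) (fun q _ ↦ sq_nonneg _)
    fun q hq hq0 ↦ hcrit q hq (pow_eq_zero_iff two_ne_zero |>.1 hq0)
  exact ⟨K, hK, convexOn_exp_mul (convex_Icc a b) hG hK.le fun q hq ↦ (h q hq).le⟩

end ExpConvexity

section TrappingInterval

/-- Consecutive critical values of `G` differ by more than `m`. -/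
def CriticalGap (G : ℝ → ℝ) (m : ℝ) : Prop :=
  ∀ c d, c < d → deriv G c = 0 → deriv G d = 0 → (∀ q ∈ Ioo c d, deriv G q ≠ 0) →
    m < |G c - G d|

lemma exists_next_zero {g : ℝ → ℝ} {g' c d : ℝ} (hg : Continuous g)
    (hderiv : HasDerivAt g g' c) (hg' : g' ≠ 0) (hcd : c < d) (hd : g d = 0) :
    ∃ e ∈ Ioc c d, g e = 0 ∧ ∀ q ∈ Ioo c e, g q ≠ 0 := by
  have hne : ∀ᶠ q in 𝓝[>] c, g q ≠ 0 :=
    (hderiv.eventually_ne hg').filter_mono (nhdsWithin_mono c fun q hq ↦ ne_of_gt hq)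
  obtain ⟨m, hm, hmne⟩ := mem_nhdsGT_iff_exists_Ioo_subset.1 hne
  have hmd : m ≤ d := not_lt.1 fun hdm ↦ hmne ⟨hcd, hdm⟩ hd
  obtain ⟨e, ⟨he, hge⟩, hleast⟩ :=
    (isCompact_Icc.inter_right (isClosed_singleton.preimage hg)).exists_isLeast
      (s := Icc m d ∩ g ⁻¹' {0}) ⟨d, ⟨hmd, le_rfl⟩, hd⟩
  refine ⟨e, ⟨hm.trans_le he.1, he.2⟩, hge, fun q hq hq0 ↦ ?_⟩
  rcases lt_or_ge q m with hqm | hmq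
  · exact hmne ⟨hq.1, hqm⟩ hq0
  · exact hq.2.not_ge (hleast ⟨⟨hmq, (hq.2.trans_le he.2).le⟩, hq0⟩)

lemma exists_connectedComponentIn_eq_Icc {S : Set ℝ} (hS : IsCompact S) {x : ℝ} (hx : x ∈ S) :
    ∃ c d, connectedComponentIn S x = Icc c d := by
  have hxC := mem_connectedComponentIn hx
  have hconn : IsPreconnected (connectedComponentIn S x) := isPreconnected_connectedComponentIn
  have hCS := connectedComponentIn_subset S x
  have hclosed : IsClosed (connectedComponentIn S x) := isClosed_of_closure_subset
    (hconn.closure.subset_connectedComponentIn (subset_closure hxC)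
      (hS.isClosed.closure_subset_iff.2 hCS))
  exact ⟨_, _, eq_Icc_of_connected_compact ⟨⟨x, hxC⟩, hconn⟩ (hS.of_isClosed_subset hclosed hCS)⟩

lemma exists_Icc_subset_of_connectedComponentIn_subset {S U : Set ℝ} (hS : IsCompact S) {x : ℝ}
    (hx : x ∈ S) (hU : IsOpen U) (hSU : connectedComponentIn S x ⊆ U) :
    ∃ a b, a < x ∧ x < b ∧ a ∉ S ∧ b ∉ S ∧ Icc a b ⊆ U := by
  set C := connectedComponentIn S x
  have hCS : C ⊆ S := connectedComponentIn_subset S x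
  have hxC : x ∈ C := mem_connectedComponentIn hx
  have hmax {t : Set ℝ} (ht : IsPreconnected t) (hxt : x ∈ t) (htS : t ⊆ S) : t ⊆ C :=
    ht.subset_connectedComponentIn hxt htS
  obtain ⟨c, d, hC⟩ : ∃ c d, C = Icc c d := exists_connectedComponentIn_eq_Icc hS hx
  rw [hC] at hxC hCS hmax hSU
  have hcd : c ≤ d := hxC.1.trans hxC.2
  obtain ⟨b, hdb, hbS, hbU⟩ : ∃ b, d < b ∧ b ∉ S ∧ Icc d b ⊆ U := by
    obtain ⟨r, hr, hrU⟩ := mem_nhdsGE_iff_exists_Icc_subset.1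
      (mem_nhdsWithin_of_mem_nhds (hU.mem_nhds (hSU (right_mem_Icc.2 hcd))))
    by_contra! hS
    have : Icc c r ⊆ Icc c d := hmax isPreconnected_Icc ⟨hxC.1, hxC.2.trans hr.le⟩ fun q hq ↦ by
      rcases le_or_gt q d with hqd | hdq
      · exact hCS ⟨hq.1, hqd⟩
      · by_contra hqS
        exact hS q hdq hqS ((Icc_subset_Icc_right hq.2).trans hrU)
    exact (this (right_mem_Icc.2 (hcd.trans hr.le))).2.not_gt hr
  obtain ⟨a, hac, haS, haU⟩ : ∃ a, a < c ∧ a ∉ S ∧ Icc a c ⊆ U := by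
    obtain ⟨r, hr, hrU⟩ := mem_nhdsLE_iff_exists_Icc_subset.1
      (mem_nhdsWithin_of_mem_nhds (hU.mem_nhds (hSU (left_mem_Icc.2 hcd))))
    by_contra! hS
    have : Icc r d ⊆ Icc c d := hmax isPreconnected_Icc ⟨hr.le.trans hxC.1, hxC.2⟩ fun q hq ↦ by
      rcases le_or_gt c q with hcq | hqc
      · exact hCS ⟨hcq, hq.2⟩
      · by_contra hqS
        exact hS q hqc hqS ((Icc_subset_Icc_left hq.1).trans hrU)
    exact (this (left_mem_Icc.2 (hr.le.trans hcd))).1.not_gt hr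
  refine ⟨a, b, hac.trans_le hxC.1, hxC.2.trans_lt hdb, haS, hbS, ?_⟩
  rw [← Icc_union_Icc_eq_Icc hac.le (hcd.trans hdb.le), ← Icc_union_Icc_eq_Icc hcd hdb.le]
  exact union_subset haU (union_subset hSU hbU)

variable {G : ℝ → ℝ} {α β : ℝ}

lemma subsingleton_critical_of_gap (hG : ContDiff ℝ 2 G)
    (hmorse : ∀ q, deriv G q = 0 → deriv (deriv G) q ≠ 0)
    (hgap : CriticalGap G (β - α)) {s : Set ℝ} (hs : s.OrdConnected)
    (hsG : MapsTo G s (Icc α β)) :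
    (s ∩ deriv G ⁻¹' {0}).Subsingleton := by
  have hG' : ContDiff ℝ 1 (deriv G) := hG.deriv'
  have hle {c d : ℝ} (hc : c ∈ s ∩ deriv G ⁻¹' {0}) (hd : d ∈ s ∩ deriv G ⁻¹' {0}) : d ≤ c := by
    by_contra! hcd
    obtain ⟨e, he, he0, hne⟩ := exists_next_zero hG'.continuous
      (hG'.differentiable one_ne_zero c).hasDerivAt (hmorse c hc.2) hcd hd.2
    have hes : e ∈ s := hs.out hc.1 hd.1 (Ioc_subset_Icc_self he)
    refine (hgap c e he.1 hc.2 he0 hne).not_ge ?_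
    rw [abs_sub_le_iff]
    constructor <;> linarith [(hsG hc.1).1, (hsG hc.1).2, (hsG hes).1, (hsG hes).2]
  exact fun c hc d hd ↦ le_antisymm (hle hd hc) (hle hc hd)

lemma critical_pos_or_neg (hmorse : ∀ q, deriv G q = 0 → deriv (deriv G) q ≠ 0) {s : Set ℝ}
    (hs : (s ∩ deriv G ⁻¹' {0}).Subsingleton) :
    (∀ q ∈ s, deriv G q = 0 → 0 < deriv (deriv G) q) ∨
      ∀ q ∈ s, deriv G q = 0 → deriv (deriv G) q < 0 := by
  rcases hs.eq_empty_or_singleton with h | ⟨c, hc⟩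
  · exact .inl fun q hq hq0 ↦ (h.subset ⟨hq, hq0⟩).elim
  · have hqc {q : ℝ} (hq : q ∈ s) (hq0 : deriv G q = 0) : q = c := hc.subset ⟨hq, hq0⟩
    rcases (hmorse c (hc.superset rfl).2).lt_or_gt with hneg | hpos
    · exact .inr fun q hq hq0 ↦ by rwa [hqc hq hq0]
    · exact .inl fun q hq hq0 ↦ by rwa [hqc hq hq0]

theorem exists_trapping_interval (hG : ContDiff ℝ 2 G) (hproper : IsProperMap G)
    (hmorse : ∀ q, deriv G q = 0 → deriv (deriv G) q ≠ 0)
    (hgap : CriticalGap G (β - α)) {x : ℝ} (hx : G x ∈ Icc α β) :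
    ∃ a b, a < x ∧ x < b ∧ G a ∉ Icc α β ∧ G b ∉ Icc α β ∧
      ((∀ q ∈ Icc a b, deriv G q = 0 → 0 < deriv (deriv G) q) ∨
        ∀ q ∈ Icc a b, deriv G q = 0 → deriv (deriv G) q < 0) := by
  have hG' : ContDiff ℝ 1 (deriv G) := hG.deriv'
  have hcrit : (connectedComponentIn (G ⁻¹' Icc α β) x ∩ deriv G ⁻¹' {0}).Subsingleton :=
    subsingleton_critical_of_gap hG hmorse hgap isPreconnected_connectedComponentIn.ordConnected
      (connectedComponentIn_subset (G ⁻¹' Icc α β) x)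
  have htrap {N : Set ℝ} (hN : IsOpen N)
      (hCN : ∀ q ∈ connectedComponentIn (G ⁻¹' Icc α β) x, deriv G q = 0 → q ∈ N) :
      ∃ a b, a < x ∧ x < b ∧ G a ∉ Icc α β ∧ G b ∉ Icc α β ∧
        ∀ q ∈ Icc a b, deriv G q = 0 → q ∈ N := by
    obtain ⟨a, b, hax, hxb, ha, hb, hab⟩ := exists_Icc_subset_of_connectedComponentIn_subset
      (hproper.isCompact_preimage isCompact_Icc) hx
      ((isOpen_ne_fun hG'.continuous continuous_const).union hN)
      fun q hq ↦ not_or_of_imp (hCN q hq)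
    exact ⟨a, b, hax, hxb, ha, hb, fun q hq ↦ (hab hq).neg_resolve_left⟩
  have hcont'' : Continuous (deriv (deriv G)) := hG'.continuous_deriv le_rfl
  rcases critical_pos_or_neg hmorse hcrit with hpos | hneg
  · obtain ⟨a, b, hax, hxb, ha, hb, hab⟩ := htrap (isOpen_lt continuous_const hcont'') hpos
    exact ⟨a, b, hax, hxb, ha, hb, .inl hab⟩
  · obtain ⟨a, b, hax, hxb, ha, hb, hab⟩ := htrap (isOpen_lt hcont'' continuous_const) hneg
    exact ⟨a, b, hax, hxb, ha, hb, .inr hab⟩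

end TrappingInterval

section Selection

variable {G f : ℝ → ℝ} {T α β : ℝ} {v : ℝ → ℝ → ℝ}

theorem exists_tendstoUniformly_of_convexOn_exp_neg {a b K : ℝ} (hT : 0 < T) (hG : Continuous G)
    (hf : Continuous f) (hfαβ : ∀ x, f x ∈ Icc α β) (ha : a < 0) (hb : 0 < b)
    (hGa : G a ∉ Icc α β) (hGb : G b ∉ Icc α β) (hK : 0 < K)
    (hconv : ConvexOn ℝ (Icc a b) fun q ↦ Real.exp (K * -G q))
    (hv : ∀ ε, 0 < ε → IsPeriodicViscSol (discounted G f ε) T (v ε))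
    (hcell : ∃ w, IsPeriodicViscSol (discounted G f 0) T w) :
    ∃ w, IsPeriodicViscSol (discounted G f 0) T w ∧ TendstoUniformly v w (𝓝[>] 0) := by
  have hneg {r : ℝ} : -r ∈ Icc (-β) (-α) ↔ r ∈ Icc α β := by rw [← neg_Icc, Set.neg_mem_neg]
  have hconv' : ConvexOn ℝ (Icc (-b) (-a)) fun q ↦ Real.exp (K * -G (-q)) := by
    have hpre : (-LinearMap.id : ℝ →ₗ[ℝ] ℝ) ⁻¹' Icc a b = Icc (-b) (-a) := neg_Icc a b
    exact hpre ▸ hconv.comp_linearMap (-LinearMap.id)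
  obtain ⟨w₀, hw₀⟩ := hcell
  obtain ⟨w, hw, hlim⟩ := exists_tendstoUniformly_of_convexOn_exp (G := fun q ↦ -G (-q)) (f := -f)
    (v := fun ε ↦ -v ε) hT (by fun_prop) hf.neg (fun x ↦ hneg.2 (hfαβ x)) (neg_lt_zero.2 hb)
    (neg_pos.2 ha) (by simpa only [neg_neg, hneg]) (by simpa only [neg_neg, hneg]) hK hconv'
    (fun ε hε ↦ reflect_discounted ▸ (hv ε hε).neg) ⟨-w₀, reflect_discounted ▸ hw₀.neg⟩
  have hlim' : TendstoUniformly (fun ε ↦ - -v ε) (-w) (𝓝[>] 0) :=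
    uniformContinuous_neg.comp_tendstoUniformly hlim
  exact ⟨-w, by simpa [reflect_discounted] using hw.neg, by simpa only [neg_neg] using hlim'⟩

theorem exists_tendstoUniformly_discounted (hT : 0 < T) (hG : ContDiff ℝ 2 G)
    (hproper : IsProperMap G) (hmorse : ∀ q, deriv G q = 0 → deriv (deriv G) q ≠ 0)
    (hgap : CriticalGap G (β - α))
    (hf : Continuous f) (hfαβ : ∀ x, f x ∈ Icc α β)
    (hv : ∀ ε, 0 < ε → IsPeriodicViscSol (discounted G f ε) T (v ε))
    (hcell : ∃ w, IsPeriodicViscSol (discounted G f 0) T w) :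
    ∃ w, IsPeriodicViscSol (discounted G f 0) T w ∧ TendstoUniformly v w (𝓝[>] 0) := by
  have hG0 : G 0 ∈ Icc α β := by
    obtain ⟨w, hw⟩ := hcell
    obtain ⟨x, hx⟩ := hw.exists_nonpos hT
    obtain ⟨y, hy⟩ := hw.exists_nonneg hT
    simp only [discounted, zero_mul, zero_add, sub_nonneg, sub_nonpos] at hx hy
    exact ⟨(hfαβ y).1.trans hy, hx.trans (hfαβ x).2⟩
  obtain ⟨a, b, ha, hb, hGa, hGb, hpos | hneg⟩ :=
    exists_trapping_interval hG hproper hmorse hgap hG0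
  · obtain ⟨K, hK, hconv⟩ := exists_convexOn_exp_mul hG hpos
    exact exists_tendstoUniformly_of_convexOn_exp hT hG.continuous hf hfαβ ha hb hGa hGb hK hconv
      hv hcell
  · obtain ⟨K, hK, hconv⟩ := exists_convexOn_exp_mul (a := a) (b := b) hG.neg
      (by simpa [deriv.fun_neg', deriv.neg'] using hneg)
    exact exists_tendstoUniformly_of_convexOn_exp_neg hT hG.continuous hf hfαβ ha hb hGa hGb hK
      hconv hv hcell

lemma IsPeriodicViscSol.add_const {E : ℝ → ℝ → ℝ → ℝ} {u : ℝ → ℝ}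
    (hu : IsPeriodicViscSol E T u) (c : ℝ) :
    IsPeriodicViscSol (fun x r q ↦ E x (r - c) q) T (fun x ↦ u x + c) := by
  have hshift (φ : ℝ → ℝ) : (fun x ↦ u x + c) - φ = u - fun x ↦ φ x - c := by
    funext x
    simp only [Pi.sub_apply]
    ring
  refine ⟨hu.continuous.add_const c, fun x ↦ congrArg (· + c) (hu.periodic x),
    fun φ hφ x hmax ↦ ?_, fun φ hφ x hmin ↦ ?_⟩
  · simpa using hu.viscSol.1 (fun x ↦ φ x - c) (by fun_prop) x (hshift φ ▸ hmax)
  · simpa using hu.viscSol.2 (fun x ↦ φ x - c) (by fun_prop) x (hshift φ ▸ hmin)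

end Selection

section Indices

variable {α : Type*} [LinearOrder α] {p : ℕ → α} {n : ℕ}

lemma exists_mem_Icc_le_and_lt_succ (hn : 1 ≤ n) {q : α} (hq : p 1 ≤ q) :
    ∃ i ∈ Icc 1 n, p i ≤ q ∧ (i < n → q < p (i + 1)) := by
  induction n, hn using Nat.le_induction with
  | base => exact ⟨1, by simp, hq, fun h ↦ absurd h (lt_irrefl 1)⟩
  | succ n hn ih =>
    rcases le_or_gt (p (n + 1)) q with hle | hlt
    · exact ⟨n + 1, ⟨by lia, le_rfl⟩, hle, fun h ↦ absurd h (lt_irrefl _)⟩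
    · obtain ⟨i, hi, hiq, hqi⟩ := ih
      refine ⟨i, ⟨hi.1, hi.2.trans n.le_succ⟩, hiq, fun _ ↦ ?_⟩
      rcases hi.2.eq_or_lt with rfl | hin
      exacts [hlt, hqi hin]

lemma eq_add_one_of_forall_notMem_Ioo (hp : StrictMonoOn p (Icc 1 n)) {i j : ℕ}
    (hi : i ∈ Icc 1 n) (hj : j ∈ Icc 1 n) (hij : p i < p j)
    (hbetween : ∀ k ∈ Icc 1 n, p k ∉ Ioo (p i) (p j)) : j = i + 1 := by
  have hlt : i < j := (hp.lt_iff_lt hi hj).1 hij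
  by_contra hne
  have hk : i + 1 ∈ Icc 1 n := ⟨by lia, le_trans hlt hj.2⟩
  exact hbetween _ hk ⟨hp hi hk i.lt_succ_self, hp hk hj (by lia)⟩

lemma exists_eq_of_eq_zero_of_alternating {g : α → ℝ} {L : ℕ}
    (hpos : ∀ i ≤ L, ∀ q, p (2 * i + 1) < q → (i < L → q < p (2 * i + 2)) → 0 < g q)
    (hneg : ∀ i ≤ L, ∀ q, (0 < i → p (2 * i) < q) → q < p (2 * i + 1) → g q < 0)
    {q : α} (hq : g q = 0) : ∃ i ∈ Icc 1 (2 * L + 1), p i = q := by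
  have hq1 : p 1 ≤ q := by
    by_contra! hlt
    exact (hneg 0 L.zero_le q (fun h ↦ absurd h (lt_irrefl 0)) hlt).ne hq
  obtain ⟨i, ⟨hi1, hiL⟩, hiq, hqi⟩ := exists_mem_Icc_le_and_lt_succ (n := 2 * L + 1) (by lia) hq1
  refine ⟨i, ⟨hi1, hiL⟩, hiq.eq_of_not_lt fun hlt ↦ ?_⟩
  rcases i.even_or_odd' with ⟨k, rfl | rfl⟩
  · exact (hneg k (by lia) q (fun _ ↦ hlt) (hqi (by lia))).ne hq
  · exact (hpos k (by lia) q hlt fun hk ↦ hqi (by lia)).ne' hq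

end Indices

lemma criticalGap_of_strictMonoOn {F : ℝ → ℝ} {p : ℕ → ℝ} {n : ℕ} {m : ℝ}
    (hp : StrictMonoOn p (Icc 1 (n + 1))) (hcrit : ∀ i ∈ Icc 1 (n + 1), deriv F (p i) = 0)
    (hzero : ∀ q, deriv F q = 0 → ∃ i ∈ Icc 1 (n + 1), p i = q)
    (hgap : ∀ i, 1 ≤ i → i ≤ n → m < |F (p i) - F (p (i + 1))|) : CriticalGap F m := by
  intro c d hcd hc hd hne
  obtain ⟨i, hi, rfl⟩ := hzero c hc
  obtain ⟨j, hj, rfl⟩ := hzero d hd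
  obtain rfl := eq_add_one_of_forall_notMem_Ioo hp hi hj hcd fun k hk hmem ↦
    hne _ hmem (hcrit k hk)
  exact hgap i hi.1 (Nat.le_of_succ_le_succ hj.2)

lemma isProperMap_of_coercive {X : Type*} [NormedAddCommGroup X] [ProperSpace X] {F : X → ℝ}
    (hF : Continuous F) (hcoer : ∀ C, ∃ R, ∀ q, R ≤ ‖q‖ → C ≤ F q) : IsProperMap F := by
  refine isProperMap_iff_tendsto_cocompact.2 ⟨hF, Tendsto.mono_right ?_ atTop_le_cocompact⟩
  refine tendsto_atTop.2 fun C ↦ ?_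
  obtain ⟨R, hR⟩ := hcoer C
  exact (tendsto_norm_cocompact_atTop.eventually_ge_atTop R).mono hR

theorem stmt15_general {T : ℝ} (hT : 0 < T) {F : ℝ → ℝ} (hF : ContDiff ℝ 2 F)
    (hproper : IsProperMap F) (hmorse : ∀ q, deriv F q = 0 → deriv (deriv F) q ≠ 0)
    {V : ℝ → ℝ} (hV : Continuous V) (hVper : Function.Periodic V T)
    (hgap : CriticalGap F (sSup (range V) - sInf (range V)))
    {P Hbar : ℝ}
    (hHbar : ∃ w : ℝ → ℝ, Continuous w ∧ Function.Periodic w T ∧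
      ViscSol1 (fun x _ q ↦ F (P + q) - V x - Hbar) w)
    {u : ℝ → ℝ → ℝ}
    (hu : ∀ ε, 0 < ε → Continuous (u ε) ∧ Function.Periodic (u ε) T ∧
      ViscSol1 (fun x r q ↦ ε * r + F (P + q) - V x) (u ε)) :
    ∃ u0 : ℝ → ℝ, Continuous u0 ∧ Function.Periodic u0 T ∧
      ViscSol1 (fun x _ q ↦ F (P + q) - V x - Hbar) u0 ∧
      TendstoUniformly (fun ε x ↦ u ε x + Hbar / ε) u0 (𝓝[>] 0) := by
  let G : ℝ → ℝ := fun q ↦ F (P + q)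
  let f : ℝ → ℝ := fun x ↦ V x + Hbar
  have hderiv (H : ℝ → ℝ) : deriv (fun q ↦ H (P + q)) = fun q ↦ deriv H (P + q) :=
    funext (deriv_comp_const_add H P)
  have hcell : discounted G f 0 = fun x _ q ↦ F (P + q) - V x - Hbar := by
    funext x r q
    simp only [discounted, G, f]
    ring
  have hshift {ε : ℝ} (hε : 0 < ε) : discounted G f ε =
      fun x r q ↦ ε * (r - Hbar / ε) + F (P + q) - V x := by
    funext x r q
    simp only [discounted, G, f]
    field_simp
    ring
  have hVcompact := hVper.compact_of_continuous hT.ne' hV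
  have hfmem (x : ℝ) : f x ∈ Icc (sInf (range V) + Hbar) (sSup (range V) + Hbar) :=
    ⟨by simpa [f] using csInf_le hVcompact.bddBelow (mem_range_self x),
      by simpa [f] using le_csSup hVcompact.bddAbove (mem_range_self x)⟩
  have hGgap : CriticalGap G (sSup (range V) + Hbar - (sInf (range V) + Hbar)) := by
    intro c d hcd hc hd hne
    simp only [G, hderiv] at hc hd hne
    rw [add_sub_add_right_eq_sub]
    refine hgap _ _ (by gcongr) hc hd fun q hq ↦ ?_
    simpa using hne (q - P) ⟨by linarith [hq.1], by linarith [hq.2]⟩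
  have hv (ε : ℝ) (hε : 0 < ε) :
      IsPeriodicViscSol (discounted G f ε) T fun x ↦ u ε x + Hbar / ε := by
    obtain ⟨huc, huper, husol⟩ := hu ε hε
    exact hshift hε ▸ IsPeriodicViscSol.add_const ⟨huc, huper, husol⟩ (Hbar / ε)
  obtain ⟨w, hw, hwper, hwsol⟩ := hHbar
  obtain ⟨u0, hu0, hlim⟩ := exists_tendstoUniformly_discounted (G := G) hT (by fun_prop)
    (hproper.comp (Homeomorph.addLeft P).isProperMap)
    (by simpa only [G, hderiv] using fun q ↦ hmorse (P + q)) hGgap (by fun_prop) hfmem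
    hv ⟨w, hw, hwper, hcell ▸ hwsol⟩
  exact ⟨u0, hu0.continuous, hu0.periodic, hcell ▸ hu0.viscSol, hlim⟩

theorem stmt15 (L : ℕ) (F : ℝ → ℝ) (hF : ContDiff ℝ 2 F)
    (p : ℕ → ℝ)
    -- p₁ < p₂ < ⋯ < p_{2L+1}
    (hmono : ∀ i j : ℕ, 1 ≤ i → i < j → j ≤ 2 * L + 1 → p i < p j)
    -- F(q) → +∞ as |q| → ∞
    (hcoer : ∀ C : ℝ, ∃ R : ℝ, ∀ q : ℝ, R ≤ |q| → C ≤ F q)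
    -- critical points: F'(pᵢ) = 0 and F''(pᵢ) ≠ 0 for 1 ≤ i ≤ 2L+1
    (hcrit : ∀ i : ℕ, 1 ≤ i → i ≤ 2 * L + 1 →
      deriv F (p i) = 0 ∧ deriv (deriv F) (p i) ≠ 0)
    -- F' > 0 on (p_{2i+1}, p_{2i+2}) for 0 ≤ i ≤ L (with p_{2L+2} = +∞)
    (hpos : ∀ i : ℕ, i ≤ L → ∀ q : ℝ, p (2 * i + 1) < q → (i < L → q < p (2 * i + 2)) →
      0 < deriv F q)
    -- F' < 0 on (p_{2i}, p_{2i+1}) for 0 ≤ i ≤ L (with p₀ = -∞)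
    (hneg : ∀ i : ℕ, i ≤ L → ∀ q : ℝ, (0 < i → p (2 * i) < q) → q < p (2 * i + 1) →
      deriv F q < 0)
    (V : ℝ → ℝ) (hVcont : Continuous V) (hVper : Function.Periodic V 1)
    -- osc(V) = max V - min V < m = min_{1 ≤ i ≤ 2L} |F(pᵢ) - F(p_{i+1})|
    (hosc : ∀ i : ℕ, 1 ≤ i → i ≤ 2 * L →
      sSup (Set.range V) - sInf (Set.range V) < |F (p i) - F (p (i + 1))|)
    (P : ℝ) (Hbar : ℝ)
    (hHbar : ∃ w : ℝ → ℝ, Continuous w ∧ Function.Periodic w 1 ∧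
      ViscSol1 (fun x _ q => F (P + q) - V x - Hbar) w)
    (u : ℝ → ℝ → ℝ)
    (hu : ∀ ε : ℝ, 0 < ε → Continuous (u ε) ∧ Function.Periodic (u ε) 1 ∧
      ViscSol1 (fun x r q => ε * r + F (P + q) - V x) (u ε)) :
    ∃ u0 : ℝ → ℝ, Continuous u0 ∧ Function.Periodic u0 1 ∧
      ViscSol1 (fun x _ q => F (P + q) - V x - Hbar) u0 ∧
      TendstoUniformly (fun ε x => u ε x + Hbar / ε) u0 (𝓝[>] (0 : ℝ)) := by
  have hzero (q : ℝ) (hq : deriv F q = 0) := exists_eq_of_eq_zero_of_alternating hpos hneg hq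
  exact stmt15_general one_pos hF (isProperMap_of_coercive hF.continuous hcoer)
    (fun q hq ↦ let ⟨i, hi, hiq⟩ := hzero q hq; hiq ▸ (hcrit i hi.1 hi.2).2) hVcont hVper
    (criticalGap_of_strictMonoOn (fun i hi j hj hij ↦ hmono i j hi.1 hij hj.2)
      (fun i hi ↦ (hcrit i hi.1 hi.2).1) hzero hosc) hHbar hu
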